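/- Assume (k₁, η) is not congruent modulo 2π (in the second component) to (1, π) or (−1, 0). Set i₁ = ∫₀^{2π} sin t · φ(k₁ sin t) dt, and let θ₁ = π/2 and θ₂ = 3π/2 if k₁ = 0 or η ≡ 0 or π (mod 2π), and otherwise θ₁ = π − θ*, θ₂ = 2π − θ* with θ* = arctan((π + i₁ cos η)/(i₁ sin η)). Then there exist ε₁ > 0 and δ > 0 such that for every ε ∈ (0, ε₁] there are 2π-periodic solutions φ_ε¹ and φ_ε² of (S'_ε) with φ_ε^i(0) → (sin θ_i, cos θ_i) as ε → 0⁺, and for each i ∈ {1,2}, φ_ε^i is the only 2π-periodic solution of (S'_ε) with initial value in the ball B_δ((sin θ_i, cos θ_i)). -/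

import Mathlib

open scoped Topology

/-- The saturation function: `φ(x) = -1` for `x < -1`, `φ(x) = x` for `-1 ≤ x ≤ 1`,
`φ(x) = 1` for `x > 1`. -/
noncomputable def sat (x : ℝ) : ℝ := if x < -1 then -1 else if x ≤ 1 then x else 1

/-- The right-hand side of the planar system (S'_ε). -/
noncomputable def sysF2 (k₁ η ε t : ℝ) (x : Fin 2 → ℝ) : Fin 2 → ℝ :=
  ![x 1 - x 0 * (x 0 ^ 2 + x 1 ^ 2 - 1),
    -x 0 - x 1 * (x 0 ^ 2 + x 1 ^ 2 - 1)
      + ε * (Real.sin t + sat (k₁ * Real.sin (t + η)))]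

open Real

instance : Fact (0 < 2 * π) := ⟨Real.two_pi_pos⟩

/-- The circle `ℝ / 2πℤ`. -/
abbrev Circ : Type := AddCircle (2 * π)

/-- The operator `f ↦ (x ↦ ∫₀^{2π} k(τ) f(x + τ) dτ)` on continuous functions on the circle. -/
noncomputable def kernelOp (k : C(ℝ, ℝ)) : C(Circ, ℝ) →L[ℝ] C(Circ, ℝ) :=
  LinearMap.mkContinuous
    { toFun := fun f =>
        { toFun := fun x => ∫ τ in (0 : ℝ)..(2 * π), k τ * f (x + (τ : Circ))
          continuous_toFun := by
            apply intervalIntegral.continuous_parametric_intervalIntegral_of_continuous'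
            have : Continuous fun p : Circ × ℝ => p.1 + (p.2 : Circ) :=
              continuous_fst.add ((AddCircle.continuous_mk' _).comp continuous_snd)
            simp only [Function.uncurry_def]
            fun_prop }
      map_add' := fun f g => by
        ext x
        have hx : Continuous fun τ : ℝ => x + (τ : Circ) :=
          continuous_const.add (AddCircle.continuous_mk' _)
        simp only [ContinuousMap.coe_mk, ContinuousMap.add_apply, mul_add]
        apply intervalIntegral.integral_add <;>
          exact Continuous.intervalIntegrable (by fun_prop) _ _
      map_smul' := fun c f => by
        ext x
        simp only [ContinuousMap.coe_mk, ContinuousMap.smul_apply, smul_eq_mul, RingHom.id_apply,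
          ← intervalIntegral.integral_const_mul]
        congr 1; ext τ; ring }
    (∫ τ in (0 : ℝ)..(2 * π), |k τ|) (fun f => by
      have h0 : 0 ≤ ∫ τ in (0 : ℝ)..(2 * π), |k τ| :=
        intervalIntegral.integral_nonneg two_pi_pos.le fun _ _ => abs_nonneg _
      rw [ContinuousMap.norm_le _ (by positivity)]
      intro x
      simp only [LinearMap.coe_mk, AddHom.coe_mk, ContinuousMap.coe_mk]
      have hx : Continuous fun τ : ℝ => x + (τ : Circ) :=
          continuous_const.add (AddCircle.continuous_mk' _)
      rw [← intervalIntegral.integral_mul_const]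
      refine intervalIntegral.norm_integral_le_of_norm_le two_pi_pos.le ?_ ?_
      · refine Filter.Eventually.of_forall fun τ _ => ?_
        rw [norm_mul]
        exact mul_le_mul_of_nonneg_left (f.norm_coe_le_norm _) (norm_nonneg _)
      · exact Continuous.intervalIntegrable (by fun_prop) _ _)

theorem kernelOp_apply (k : C(ℝ, ℝ)) (f : C(Circ, ℝ)) (x : Circ) :
    kernelOp k f x = ∫ τ in (0 : ℝ)..(2 * π), k τ * f (x + (τ : Circ)) := rfl

theorem kernelOp_apply_coe (k : C(ℝ, ℝ)) (f : C(Circ, ℝ)) (t : ℝ) :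
    kernelOp k f (t : Circ) = ∫ u in t..(t + 2 * π), k (u - t) * f (u : Circ) := by
  rw [kernelOp_apply]
  have := intervalIntegral.integral_comp_add_left (a := 0) (b := 2 * π)
    (fun u => k (u - t) * f (u : Circ)) t
  simpa using this

theorem hasDerivAt_integral_period {h : ℝ → ℝ} (hh : Continuous h) (t : ℝ) :
    HasDerivAt (fun t => ∫ u in t..(t + 2 * π), h u) (h (t + 2 * π) - h t) t := by
  have h1 : ∀ t, (∫ u in t..(t + 2 * π), h u) =
      (∫ u in (0 : ℝ)..(t + 2 * π), h u) - ∫ u in (0 : ℝ)..t, h u := fun t => by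
    rw [intervalIntegral.integral_interval_sub_left] <;> exact hh.intervalIntegrable _ _
  have hF : ∀ s, HasDerivAt (fun s => ∫ u in (0 : ℝ)..s, h u) (h s) s := fun s =>
    (hh.integral_hasStrictDerivAt 0 s).hasDerivAt
  simp only [h1]
  exact ((hF (t + 2 * π)).comp_add_const t (2 * π)).sub (hF t)

theorem coe_add_two_pi (t : ℝ) : ((t + 2 * π : ℝ) : Circ) = (t : Circ) :=
  AddCircle.coe_add_period _ _

theorem continuous_comp_coe {E : Type*} [TopologicalSpace E] (f : C(Circ, E)) :
    Continuous fun t : ℝ => f (t : Circ) :=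
  f.continuous.comp (AddCircle.continuous_mk' _)

/-- Integration over the circle. -/
noncomputable def circInt : C(Circ, ℝ) →L[ℝ] ℝ :=
  (ContinuousMap.evalCLM ℝ (0 : Circ)).comp (kernelOp 1)

theorem circInt_apply (f : C(Circ, ℝ)) : circInt f = ∫ t in (0 : ℝ)..(2 * π), f (t : Circ) := by
  change kernelOp 1 f 0 = _
  simp [kernelOp_apply]

/-- The operator sending `f` to the periodic solution of `y' = -2 y + f`. -/
noncomputable def decayOp : C(Circ, ℝ) →L[ℝ] C(Circ, ℝ) :=
  kernelOp ⟨fun τ => (exp (2 * (2 * π)) - 1)⁻¹ * exp (2 * τ), by fun_prop⟩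

theorem hasDerivAt_decayOp (f : C(Circ, ℝ)) (t : ℝ) :
    HasDerivAt (fun t : ℝ => decayOp f (t : Circ))
      (-2 * decayOp f (t : Circ) + f (t : Circ)) t := by
  have hc : exp (2 * (2 * π)) - 1 ≠ 0 := by
    have : 1 < exp (2 * (2 * π)) := Real.one_lt_exp_iff.2 (by positivity)
    linarith
  set c := (exp (2 * (2 * π)) - 1)⁻¹ with hcdef
  have key : ∀ t : ℝ, decayOp f (t : Circ) =
      exp (-2 * t) * ∫ u in t..(t + 2 * π), c * exp (2 * u) * f (u : Circ) := by
    intro t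
    rw [decayOp, kernelOp_apply_coe, ← intervalIntegral.integral_const_mul]
    congr 1; ext u
    have : exp (2 * (u - t)) = exp (-2 * t) * exp (2 * u) := by rw [← Real.exp_add]; ring_nf
    simp only [ContinuousMap.coe_mk, this]; ring
  simp only [key]
  have hf := continuous_comp_coe f
  have h1 := hasDerivAt_integral_period (h := fun u => c * exp (2 * u) * f (u : Circ))
    (by fun_prop) t
  have h2 : HasDerivAt (fun t : ℝ => exp (-2 * t)) (exp (-2 * t) * -2) t := by
    simpa using ((hasDerivAt_id t).const_mul (-2)).exp
  refine (h2.mul h1).congr_deriv ?_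
  rw [coe_add_two_pi, mul_add 2 t, Real.exp_add]
  have h3 : exp (-2 * t) * exp (2 * t) = 1 := by rw [← Real.exp_add]; simp
  have h4 : c * exp (2 * (2 * π)) - c = 1 := by rw [hcdef, ← mul_sub_one, inv_mul_cancel₀ hc]
  linear_combination (f (t : Circ) * (c * exp (2 * (2 * π)) - c)) * h3 + f (t : Circ) * h4

/-- The operator sending `f` of mean zero to its primitive vanishing at `0`. -/
noncomputable def primOp : C(Circ, ℝ) →L[ℝ] C(Circ, ℝ) :=
  let J := kernelOp ⟨fun τ => (2 * π)⁻¹ * τ, by fun_prop⟩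
  J - (ContinuousLinearMap.smulRight ((ContinuousMap.evalCLM ℝ (0 : Circ)).comp J) 1)

theorem primOp_zero (f : C(Circ, ℝ)) : primOp f 0 = 0 := by
  simp [primOp]

theorem hasDerivAt_primOp (f : C(Circ, ℝ)) (hf0 : circInt f = 0) (t : ℝ) :
    HasDerivAt (fun t : ℝ => primOp f (t : Circ)) (f (t : Circ)) t := by
  have hf := continuous_comp_coe f
  have key : ∀ t : ℝ, kernelOp ⟨fun τ => (2 * π)⁻¹ * τ, by fun_prop⟩ f (t : Circ) =
      (∫ u in t..(t + 2 * π), (2 * π)⁻¹ * u * f (u : Circ)) -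
      (2 * π)⁻¹ * t * ∫ u in t..(t + 2 * π), f (u : Circ) := by
    intro t
    rw [kernelOp_apply_coe, ← intervalIntegral.integral_const_mul,
      ← intervalIntegral.integral_sub (Continuous.intervalIntegrable (by fun_prop) _ _)
        (Continuous.intervalIntegrable (by fun_prop) _ _)]
    congr 1; ext u
    simp only [ContinuousMap.coe_mk]; ring
  have hz : ∀ t : ℝ, ∫ u in t..(t + 2 * π), f (u : Circ) = 0 := by
    intro t
    have hp : Function.Periodic (fun u : ℝ => f (u : Circ)) (2 * π) := fun u => by
      simp only [coe_add_two_pi]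
    rw [hp.intervalIntegral_add_eq t 0, zero_add, ← circInt_apply, hf0]
  have h1 := hasDerivAt_integral_period (h := fun u => (2 * π)⁻¹ * u * f (u : Circ))
    (by fun_prop) t
  simp only [primOp, sub_apply, ContinuousMap.sub_apply, key, hz]
  simp only [mul_zero, sub_zero, ContinuousLinearMap.smulRight_apply, ContinuousMap.smul_apply,
    ContinuousMap.one_apply]
  refine (h1.sub_const _).congr_deriv ?_
  rw [coe_add_two_pi]
  field_simp
  ring

/-- Pointwise real part. -/
noncomputable def reOp : C(Circ, ℂ) →L[ℝ] C(Circ, ℝ) := Complex.reCLM.compLeftContinuous ℝ Circ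

/-- Pointwise imaginary part. -/
noncomputable def imOp : C(Circ, ℂ) →L[ℝ] C(Circ, ℝ) := Complex.imCLM.compLeftContinuous ℝ Circ

/-- The pair `(s, β)` as the complex function `s + iβ`. -/
noncomputable def toComplexOp : C(Circ, ℝ) × C(Circ, ℝ) →L[ℝ] C(Circ, ℂ) :=
  (Complex.ofRealCLM.compLeftContinuous ℝ Circ).coprod
    ((Complex.I • Complex.ofRealCLM).compLeftContinuous ℝ Circ)

@[simp] theorem reOp_apply (f : C(Circ, ℂ)) (x : Circ) : reOp f x = (f x).re := rfl

@[simp] theorem imOp_apply (f : C(Circ, ℂ)) (x : Circ) : imOp f x = (f x).im := rfl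

@[simp] theorem toComplexOp_apply (v : C(Circ, ℝ) × C(Circ, ℝ)) (x : Circ) :
    toComplexOp v x = ⟨v.1 x, v.2 x⟩ := by
  simp [toComplexOp, Complex.ext_iff]

theorem exp_real_apply (f : C(Circ, ℝ)) (x : Circ) : NormedSpace.exp f x = Real.exp (f x) := by
  rw [Real.exp_eq_exp_ℝ]
  exact NormedSpace.map_exp (ContinuousMap.evalAlgHom ℝ ℝ x) (continuous_eval_const x) f

theorem exp_complex_apply (f : C(Circ, ℂ)) (x : Circ) :
    NormedSpace.exp f x = Complex.exp (f x) := by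
  rw [Complex.exp_eq_exp_ℂ]
  exact NormedSpace.map_exp (ContinuousMap.evalAlgHom ℂ ℂ x) (continuous_eval_const x) f

theorem contDiff_normedSpace_exp {A : Type*} [NormedCommRing A] [NormedAlgebra ℝ A]
    [CompleteSpace A] : ContDiff ℝ 1 (NormedSpace.exp : A → A) := by
  rw [contDiff_iff_contDiffAt]
  intro x
  exact (NormedSpace.exp_analytic (𝕂 := ℝ) x).contDiffAt

/-- The forcing term `g exp(-ζ)` in logarithmic coordinates `ζ = s + iβ`. -/
noncomputable def forcing (g : C(Circ, ℂ)) (v : C(Circ, ℝ) × C(Circ, ℝ)) : C(Circ, ℂ) :=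
  g * NormedSpace.exp (-toComplexOp v)

/-- The map whose zeros are the periodic solutions of
`ζ' = 1 - exp (2 Re ζ) + ε g exp (-ζ)`. -/
noncomputable def bifMap (g : C(Circ, ℂ)) (v : ℝ × (C(Circ, ℝ) × C(Circ, ℝ))) :
    C(Circ, ℝ) × C(Circ, ℝ) :=
  (v.2.1 - decayOp (1 - NormedSpace.exp ((2 : ℝ) • v.2.1) + (2 : ℝ) • v.2.1
      + v.1 • reOp (forcing g v.2)),
    v.2.2 - (ContinuousMap.evalCLM ℝ (0 : Circ) v.2.2) • 1
      - v.1 • primOp (imOp (forcing g v.2)) - circInt (imOp (forcing g v.2)) • 1)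

theorem contDiff_forcing (g : C(Circ, ℂ)) : ContDiff ℝ 1 (forcing g) := by
  unfold forcing
  exact contDiff_const.mul (contDiff_normedSpace_exp.comp toComplexOp.contDiff.neg)

theorem contDiff_bifMap (g : C(Circ, ℂ)) : ContDiff ℝ 1 (bifMap g) := by
  have hF : ContDiff ℝ 1 fun v : ℝ × (C(Circ, ℝ) × C(Circ, ℝ)) => forcing g v.2 :=
    (contDiff_forcing g).comp contDiff_snd
  have hE : ContDiff ℝ 1 fun v : ℝ × (C(Circ, ℝ) × C(Circ, ℝ)) =>
      NormedSpace.exp ((2 : ℝ) • v.2.1) :=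
    contDiff_normedSpace_exp.comp (by fun_prop)
  unfold bifMap
  refine ContDiff.prodMk ?_ ?_ <;> fun_prop

theorem bifMap_zero (g : C(Circ, ℂ)) (h0 : circInt (imOp g) = 0) : bifMap g (0, 0) = 0 := by
  simp [bifMap, forcing, h0]

/-- The derivative of `bifMap g (0, ·)` at the origin. -/
noncomputable def bifDeriv (g : C(Circ, ℂ)) :
    C(Circ, ℝ) × C(Circ, ℝ) →L[ℝ] C(Circ, ℝ) × C(Circ, ℝ) :=
  (ContinuousLinearMap.fst ℝ _ _).prod
    (ContinuousLinearMap.snd ℝ _ _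
      - ((ContinuousMap.evalCLM ℝ (0 : Circ)).comp (ContinuousLinearMap.snd ℝ _ _)).smulRight 1
      + (circInt ∘L imOp ∘L (ContinuousLinearMap.mul ℝ _ g) ∘L toComplexOp).smulRight 1)

theorem hasFDerivAt_bifMap_partial (g : C(Circ, ℂ)) :
    HasFDerivAt (fun v => bifMap g (0, v)) (bifDeriv g) 0 := by
  have hF : HasFDerivAt (forcing g) (-(ContinuousLinearMap.mul ℝ _ g) ∘L toComplexOp) 0 := by
    have h1 : HasFDerivAt (NormedSpace.exp : C(Circ, ℂ) → C(Circ, ℂ))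
        (1 : C(Circ, ℂ) →L[ℝ] C(Circ, ℂ)) (-toComplexOp 0) := by
      simpa using hasFDerivAt_exp_zero (𝕂 := ℝ) (𝔸 := C(Circ, ℂ))
    have h2 := (ContinuousLinearMap.mul ℝ _ g).hasFDerivAt.comp (0 : C(Circ, ℝ) × C(Circ, ℝ))
      (h1.comp 0 toComplexOp.hasFDerivAt.neg)
    refine h2.congr_fderiv ?_
    refine ContinuousLinearMap.ext fun v => ?_
    simp
  have hE : HasFDerivAt (fun v : C(Circ, ℝ) × C(Circ, ℝ) => NormedSpace.exp ((2 : ℝ) • v.1))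
      ((2 : ℝ) • ContinuousLinearMap.fst ℝ _ _) 0 := by
    have h1 : HasFDerivAt (NormedSpace.exp : C(Circ, ℝ) → C(Circ, ℝ))
        (1 : C(Circ, ℝ) →L[ℝ] C(Circ, ℝ)) ((2 : ℝ) • (0 : C(Circ, ℝ) × C(Circ, ℝ)).1) := by
      simpa using hasFDerivAt_exp_zero (𝕂 := ℝ) (𝔸 := C(Circ, ℝ))
    exact HasFDerivAt.comp (f := fun v : C(Circ, ℝ) × C(Circ, ℝ) => (2 : ℝ) • v.1) 0 h1
      ((2 : ℝ) • ContinuousLinearMap.fst ℝ C(Circ, ℝ) C(Circ, ℝ)).hasFDerivAt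
  have hI := ((ContinuousLinearMap.smulRight circInt (1 : C(Circ, ℝ))) ∘L imOp).hasFDerivAt.comp 0 hF
  have hD := decayOp.hasFDerivAt.comp 0
    ((hE.const_sub 1).add ((2 : ℝ) • ContinuousLinearMap.fst ℝ C(Circ, ℝ) C(Circ, ℝ)).hasFDerivAt)
  have h0 := (((ContinuousMap.evalCLM ℝ (0 : Circ)).comp
    (ContinuousLinearMap.snd ℝ C(Circ, ℝ) C(Circ, ℝ))).smulRight (1 : C(Circ, ℝ))).hasFDerivAt
    (x := 0)
  have := (hasFDerivAt_fst.sub hD).prodMk ((hasFDerivAt_snd.sub h0).sub hI)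
  refine (this.congr_fderiv ?_).congr_of_eventuallyEq (Filter.Eventually.of_forall fun v => ?_)
  · refine ContinuousLinearMap.ext fun v => ?_
    simp [bifDeriv]
  · simp [bifMap]

theorem bifDeriv_isInvertible (g : C(Circ, ℂ)) (h1 : circInt (reOp g) ≠ 0) :
    (bifDeriv g).IsInvertible := by
  set ℓ : C(Circ, ℝ) × C(Circ, ℝ) →L[ℝ] ℝ :=
    circInt ∘L imOp ∘L (ContinuousLinearMap.mul ℝ _ g) ∘L toComplexOp with hℓ
  have hℓ1 : ℓ (0, 1) = circInt (reOp g) := by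
    simp only [hℓ, ContinuousLinearMap.comp_apply]
    congr 1
    ext x
    simp
  have happ : ∀ v, bifDeriv g v = (v.1, v.2 - v.2 0 • 1 + ℓ v • 1) := fun v => rfl
  set m := circInt (reOp g) with hm
  have hsplit : ∀ (a b : C(Circ, ℝ)) (c : ℝ), ℓ (a, b + c • 1) = ℓ (a, b) + c * m := by
    intro a b c
    have : (a, b + c • (1 : C(Circ, ℝ))) = (a, b) + c • ((0 : C(Circ, ℝ)), (1 : C(Circ, ℝ))) := by simp
    rw [this, map_add, map_smul, hℓ1, smul_eq_mul]
  refine ContinuousLinearMap.IsInvertible.of_inverse (g :=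
    (ContinuousLinearMap.fst ℝ _ _).prod (ContinuousLinearMap.snd ℝ _ _ +
      (m⁻¹ • ((ContinuousMap.evalCLM ℝ (0 : Circ)).comp (ContinuousLinearMap.snd ℝ _ _)
        - ℓ)).smulRight 1)) ?_ ?_
  · refine ContinuousLinearMap.ext fun v => ?_
    simp only [ContinuousLinearMap.comp_apply, happ, ContinuousLinearMap.prod_apply,
      ContinuousLinearMap.coe_fst', ContinuousLinearMap.coe_snd', add_apply,
      ContinuousLinearMap.smulRight_apply, ContinuousLinearMap.id_apply]
    rw [hsplit]
    refine Prod.ext rfl ?_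
    ext x
    simp
    field_simp
    ring
  · refine ContinuousLinearMap.ext fun v => ?_
    simp only [ContinuousLinearMap.comp_apply, happ, ContinuousLinearMap.prod_apply,
      ContinuousLinearMap.coe_fst', ContinuousLinearMap.coe_snd', add_apply,
      ContinuousLinearMap.smulRight_apply, ContinuousLinearMap.id_apply]
    refine Prod.ext rfl ?_
    have := hsplit v.1 v.2 (ℓ v - v.2 0)
    have h2 : v.2 - v.2 0 • (1 : C(Circ, ℝ)) + ℓ v • 1 = v.2 + (ℓ v - v.2 0) • 1 := by
      rw [sub_smul]; abel
    rw [h2]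
    ext x
    simp [this]
    field_simp
    ring

theorem exists_bifMap_zeros (g : C(Circ, ℂ)) (h0 : circInt (imOp g) = 0)
    (h1 : circInt (reOp g) ≠ 0) :
    ∃ γ : ℝ → C(Circ, ℝ) × C(Circ, ℝ), Filter.Tendsto γ (𝓝 0) (𝓝 0) ∧
      ∀ᶠ v in 𝓝 ((0 : ℝ), (0 : C(Circ, ℝ) × C(Circ, ℝ))), bifMap g v = 0 ↔ γ v.1 = v.2 := by
  have hS : HasStrictFDerivAt (bifMap g) (fderiv ℝ (bifMap g) (0, 0)) (0, 0) :=
    (contDiff_bifMap g).contDiffAt.hasStrictFDerivAt one_ne_zero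
  have hP : (fderiv ℝ (bifMap g) (0, 0)) ∘L ContinuousLinearMap.inr ℝ ℝ _ = bifDeriv g := by
    have h2 := hS.hasFDerivAt.comp (0 : C(Circ, ℝ) × C(Circ, ℝ))
      (f := fun v => ((0 : ℝ), v)) (hasFDerivAt_prodMk_right 0 0)
    exact h2.unique (hasFDerivAt_bifMap_partial g)
  have hI := bifDeriv_isInvertible g h1
  rw [← hP] at hI
  refine ⟨hS.implicitFunctionOfProdDomain hI, hS.tendsto_implicitFunctionOfProdDomain hI, ?_⟩
  have := hS.eventually_apply_eq_iff_implicitFunctionOfProdDomain hI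
  rwa [bifMap_zero g h0] at this

theorem eq_of_hasDerivAt_zero {f : ℝ → ℝ} (hf : ∀ t, HasDerivAt f 0 t) (t : ℝ) :
    f t = f 0 :=
  is_const_of_deriv_eq_zero (fun t => (hf t).differentiableAt) (fun t => (hf t).deriv) t 0

theorem eq_decayOp_of_hasDerivAt (s f : C(Circ, ℝ))
    (h : ∀ t : ℝ, HasDerivAt (fun t : ℝ => s (t : Circ)) (-2 * s (t : Circ) + f (t : Circ)) t) :
    s = decayOp f := by
  have hE : ∀ t : ℝ, HasDerivAt (fun t : ℝ => exp (2 * t)) (exp (2 * t) * 2) t := fun t => by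
    simpa using ((hasDerivAt_id t).const_mul 2).exp
  have hd : ∀ t : ℝ, HasDerivAt
      (fun t : ℝ => exp (2 * t) * (s (t : Circ) - decayOp f (t : Circ))) 0 t := fun t =>
    ((hE t).mul ((h t).sub (hasDerivAt_decayOp f t))).congr_deriv (by simp only [Pi.sub_apply]; ring)
  ext x
  induction x using QuotientAddGroup.induction_on with
  | H t =>
  have h1 := eq_of_hasDerivAt_zero hd t
  have h2 := eq_of_hasDerivAt_zero hd (t + 2 * π)
  rw [← h1, coe_add_two_pi] at h2
  have h3 : exp (2 * t) < exp (2 * (t + 2 * π)) :=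
    Real.exp_lt_exp.2 (by linarith [Real.pi_pos])
  have h4 : (exp (2 * (t + 2 * π)) - exp (2 * t)) * (s (t : Circ) - decayOp f (t : Circ)) = 0 := by
    linarith
  rcases mul_eq_zero.1 h4 with h | h
  · linarith
  · exact sub_eq_zero.1 h

theorem circInt_eq_zero_of_hasDerivAt (b f : C(Circ, ℝ))
    (h : ∀ t : ℝ, HasDerivAt (fun t : ℝ => b (t : Circ)) (f (t : Circ)) t) : circInt f = 0 := by
  rw [circInt_apply, intervalIntegral.integral_eq_sub_of_hasDerivAt (fun t _ => h t)
    ((continuous_comp_coe f).intervalIntegrable _ _)]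
  have := coe_add_two_pi 0
  rw [zero_add] at this
  rw [this, sub_self]

theorem eq_primOp_of_hasDerivAt (b f : C(Circ, ℝ))
    (h : ∀ t : ℝ, HasDerivAt (fun t : ℝ => b (t : Circ)) (f (t : Circ)) t) :
    b = b 0 • 1 + primOp f := by
  have h0 := circInt_eq_zero_of_hasDerivAt b f h
  have hd : ∀ t : ℝ, HasDerivAt (fun t : ℝ => b (t : Circ) - primOp f (t : Circ)) 0 t := fun t =>
    ((h t).sub (hasDerivAt_primOp f h0 t)).congr_deriv (sub_self _)
  ext x
  induction x using QuotientAddGroup.induction_on with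
  | H t =>
  have h1 := eq_of_hasDerivAt_zero hd t
  rw [QuotientAddGroup.mk_zero, primOp_zero] at h1
  simp only [ContinuousMap.add_apply, ContinuousMap.smul_apply, ContinuousMap.one_apply,
    smul_eq_mul, mul_one]
  linarith

theorem bifMap_eq_zero_iff (g : C(Circ, ℂ)) {ε : ℝ} (hε : ε ≠ 0) (v : C(Circ, ℝ) × C(Circ, ℝ)) :
    bifMap g (ε, v) = 0 ↔ ∀ t : ℝ, HasDerivAt (fun t : ℝ => toComplexOp v (t : Circ))
      (1 - (exp (2 * v.1 (t : Circ)) : ℝ)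
        + ε * (g (t : Circ) * Complex.exp (-toComplexOp v (t : Circ)))) t := by
  obtain ⟨s, b⟩ := v
  set H := forcing g (s, b) with hH
  have hHapp : ∀ x, H x = g x * Complex.exp (-toComplexOp (s, b) x) := fun x => by
    rw [hH, forcing, ContinuousMap.mul_apply, exp_complex_apply, ContinuousMap.neg_apply]
  set N : C(Circ, ℝ) := 1 - NormedSpace.exp ((2 : ℝ) • s) + (2 : ℝ) • s + ε • reOp H with hN
  have hNapp : ∀ x, -2 * s x + N x = 1 - exp (2 * s x) + ε * (H x).re := fun x => by
    simp [hN, exp_real_apply]; ring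
  have hre : ∀ x, ((1 - (exp (2 * s x) : ℝ) + ε * H x : ℂ)).re = -2 * s x + N x := fun x => by
    rw [hNapp]; simp [-Complex.ofReal_exp]
  have him : ∀ x, ((1 - (exp (2 * s x) : ℝ) + ε * H x : ℂ)).im = ε * (H x).im := fun x => by
    simp [-Complex.ofReal_exp]
  simp only [← hHapp]
  have hbif : bifMap g (ε, (s, b)) =
    (s - decayOp N, b - b 0 • 1 - ε • primOp (imOp H) - circInt (imOp H) • 1) := rfl
  rw [hbif, Prod.mk_eq_zero]
  constructor
  · rintro ⟨h1, h2⟩ t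
    have hI : circInt (imOp H) = 0 := by
      have := congrArg (fun f => f (0 : Circ)) h2
      simpa [primOp_zero] using this
    have hs : HasDerivAt (fun t : ℝ => s (t : Circ)) (-2 * s (t : Circ) + N (t : Circ)) t := by
      have := hasDerivAt_decayOp N t
      rwa [← sub_eq_zero.1 h1] at this
    have hb : HasDerivAt (fun t : ℝ => b (t : Circ)) (ε * (H (t : Circ)).im) t := by
      have h3 : ∀ x, b x = b 0 + ε * primOp (imOp H) x := fun x => by
        have := congrArg (fun f => f x) h2
        simp [hI] at this
        linarith
      simp only [fun t : ℝ => h3 (t : Circ)]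
      exact ((hasDerivAt_primOp (imOp H) hI t).const_mul ε).const_add _
    have := hs.ofReal_comp.add (hb.ofReal_comp.mul_const Complex.I)
    refine (this.congr_of_eventuallyEq (Filter.Eventually.of_forall fun t => ?_)).congr_deriv ?_
    · simp [Complex.ext_iff]
    · rw [← hre, ← him, Complex.re_add_im]
  · intro h
    have hs : ∀ t : ℝ, HasDerivAt (fun t : ℝ => s (t : Circ))
        (-2 * s (t : Circ) + N (t : Circ)) t := fun t => by
      have := Complex.reCLM.hasFDerivAt.comp_hasDerivAt t (h t)
      rw [← hre]
      simpa [Function.comp_def] using this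
    have hb : ∀ t : ℝ, HasDerivAt (fun t : ℝ => b (t : Circ))
        ((ε • imOp H) (t : Circ)) t := fun t => by
      have := Complex.imCLM.hasFDerivAt.comp_hasDerivAt t (h t)
      have h2 := him (t : Circ)
      simp only [ContinuousMap.smul_apply, imOp_apply, smul_eq_mul]
      rw [← h2]
      simpa [Function.comp_def] using this
    refine ⟨sub_eq_zero.2 (eq_decayOp_of_hasDerivAt s N hs), ?_⟩
    have h1 := circInt_eq_zero_of_hasDerivAt b _ hb
    have h2 := eq_primOp_of_hasDerivAt b _ hb
    rw [map_smul, smul_eq_mul, mul_eq_zero, or_iff_right hε] at h1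
    rw [map_smul] at h2
    rw [h1, zero_smul, sub_zero, sub_sub, sub_eq_zero]
    exact h2

/-- The continuous function on the circle induced by a continuous periodic function. -/
noncomputable def periodicLift {E : Type*} [TopologicalSpace E] (f : ℝ → E) (hc : Continuous f)
    (hp : Function.Periodic f (2 * π)) : C(Circ, E) :=
  ⟨hp.lift, continuous_coinduced_dom.2 hc⟩

@[simp] theorem periodicLift_coe {E : Type*} [TopologicalSpace E] (f : ℝ → E) (hc : Continuous f)
    (hp : Function.Periodic f (2 * π)) (t : ℝ) : periodicLift f hc hp (t : Circ) = f t := rfl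

/-- `w` solves `w' = w (1 - |w|²) + ε g`. -/
def IsRotSol (g : C(Circ, ℂ)) (ε : ℝ) (w : ℝ → ℂ) : Prop :=
  ∀ t : ℝ, HasDerivAt w (w t * (1 - (‖w t‖ ^ 2 : ℝ)) + ε * g (t : Circ)) t

theorem IsRotSol.continuous {g : C(Circ, ℂ)} {ε : ℝ} {w : ℝ → ℂ} (hw : IsRotSol g ε w) :
    Continuous w :=
  continuous_iff_continuousAt.2 fun t => (hw t).continuousAt

theorem IsRotSol.norm_le_two {g : C(Circ, ℂ)} {ε : ℝ} {w : ℝ → ℂ} (hw : IsRotSol g ε w)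
    (hp : Function.Periodic w (2 * π)) (hε : 0 ≤ ε) (hg : ε * ‖g‖ ≤ 1) (t : ℝ) : ‖w t‖ ≤ 2 := by
  obtain ⟨x, -, hx⟩ := isCompact_univ.exists_isMaxOn (Set.univ_nonempty (α := Circ))
    (periodicLift w hw.continuous hp).continuous.norm.continuousOn
  obtain ⟨t₀, rfl⟩ := QuotientAddGroup.mk_surjective x
  have hmax : ∀ t, ‖w t‖ ≤ ‖w t₀‖ := fun t => hx (Set.mem_univ (t : Circ))
  refine (hmax t).trans ?_
  have hloc : IsLocalMax (fun t => ‖w t‖ ^ 2) t₀ :=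
    Filter.Eventually.of_forall fun t => pow_le_pow_left₀ (norm_nonneg _) (hmax t) 2
  have h0 := hloc.hasDerivAt_eq_zero (hw t₀).norm_sq
  rw [inner_add_right] at h0
  have h1 : inner ℝ (w t₀) (w t₀ * (1 - (‖w t₀‖ ^ 2 : ℝ))) = ‖w t₀‖ ^ 2 * (1 - ‖w t₀‖ ^ 2) := by
    have : w t₀ * (1 - (‖w t₀‖ ^ 2 : ℝ)) = (1 - ‖w t₀‖ ^ 2 : ℝ) • w t₀ := by
      rw [Complex.real_smul]; push_cast; ring
    rw [this, inner_smul_right, real_inner_self_eq_norm_sq]; ring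
  have h2 : inner ℝ (w t₀) (ε * g (t₀ : Circ)) ≤ ‖w t₀‖ := by
    refine (real_inner_le_norm _ _).trans ?_
    rw [norm_mul, Complex.norm_real, Real.norm_of_nonneg hε]
    have : ε * ‖g (t₀ : Circ)‖ ≤ 1 :=
      (mul_le_mul_of_nonneg_left (g.norm_coe_le_norm _) hε).trans hg
    exact mul_le_of_le_one_right (norm_nonneg _) this
  rw [h1] at h0
  by_contra! hn
  set n := ‖w t₀‖
  nlinarith [mul_pos (by linarith : 0 < n) (by nlinarith : 0 < n * (n ^ 2 - 1) - 1)]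

theorem IsRotSol.norm_sub_one_le {g : C(Circ, ℂ)} {ε : ℝ} {w : ℝ → ℂ} (hw : IsRotSol g ε w)
    (hp : Function.Periodic w (2 * π)) (hε : 0 ≤ ε) (hg : ε * ‖g‖ ≤ 1) (t : ℝ) :
    ‖w t - 1‖ ≤ (‖w 0 - 1‖ + ε * ‖g‖) * exp (6 * (2 * π)) := by
  obtain ⟨u, hu, hut⟩ := hp.exists_mem_Ico₀ two_pi_pos t
  rw [hut]
  have hd : ∀ t, HasDerivAt (fun t => w t - 1) (w t * (1 - (‖w t‖ ^ 2 : ℝ)) + ε * g (t : Circ)) t :=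
    fun t => (hw t).sub_const 1
  have hb : ∀ t, ‖w t * (1 - (‖w t‖ ^ 2 : ℝ)) + ε * g (t : Circ)‖ ≤ 6 * ‖w t - 1‖ + ε * ‖g‖ := by
    intro t
    refine (norm_add_le _ _).trans (add_le_add ?_ ?_)
    · have h2 := hw.norm_le_two hp hε hg t
      have h3 : |1 - ‖w t‖| ≤ ‖w t - 1‖ := by
        have := abs_norm_sub_norm_le (w t) 1
        rwa [norm_one, abs_sub_comm] at this
      have h4 : ‖(1 - (‖w t‖ ^ 2 : ℝ) : ℂ)‖ = |1 - ‖w t‖| * (1 + ‖w t‖) := by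
        rw [← Complex.ofReal_one, ← Complex.ofReal_sub, Complex.norm_real, Real.norm_eq_abs,
          show 1 - ‖w t‖ ^ 2 = (1 - ‖w t‖) * (1 + ‖w t‖) by ring, abs_mul,
          abs_of_nonneg (by positivity : 0 ≤ 1 + ‖w t‖)]
      rw [norm_mul, h4]
      have h5 : ‖w t‖ * (1 + ‖w t‖) ≤ 6 := by nlinarith [norm_nonneg (w t)]
      calc ‖w t‖ * (|1 - ‖w t‖| * (1 + ‖w t‖)) = (‖w t‖ * (1 + ‖w t‖)) * |1 - ‖w t‖| := by ring
        _ ≤ 6 * ‖w t - 1‖ := mul_le_mul h5 h3 (abs_nonneg _) (by norm_num)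
    · rw [norm_mul, Complex.norm_real, Real.norm_of_nonneg hε]
      exact mul_le_mul_of_nonneg_left (g.norm_coe_le_norm _) hε
  have hG := norm_le_gronwallBound_of_norm_deriv_right_le (f := fun t => w t - 1) (a := 0)
    (b := 2 * π) (δ := ‖w 0 - 1‖) (hw.continuous.sub continuous_const).continuousOn
    (fun t _ => (hd t).hasDerivWithinAt) le_rfl (fun t _ => hb t) u ⟨hu.1, hu.2.le⟩
  refine hG.trans ?_
  rw [gronwallBound_of_K_ne_0 (by norm_num), sub_zero]
  have h1 : exp (6 * u) ≤ exp (6 * (2 * π)) := Real.exp_le_exp.2 (by linarith [hu.2])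
  have h2 : 0 ≤ ε * ‖g‖ := by positivity
  have h3 := exp_pos (6 * (2 * π))
  nlinarith [mul_le_mul_of_nonneg_left h1 (norm_nonneg (w 0 - 1)), mul_le_mul_of_nonneg_left h1 h2,
    mul_nonneg h2 h3.le]

theorem hasDerivAt_exp_toComplexOp {g : C(Circ, ℂ)} {ε : ℝ} {v : C(Circ, ℝ) × C(Circ, ℝ)}
    (h : ∀ t : ℝ, HasDerivAt (fun t : ℝ => toComplexOp v (t : Circ))
      (1 - (exp (2 * v.1 (t : Circ)) : ℝ)
        + ε * (g (t : Circ) * Complex.exp (-toComplexOp v (t : Circ)))) t) :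
    IsRotSol g ε fun t => Complex.exp (toComplexOp v (t : Circ)) := by
  intro t
  refine (h t).cexp.congr_deriv ?_
  have h1 : ‖Complex.exp (toComplexOp v (t : Circ))‖ ^ 2 = exp (2 * v.1 (t : Circ)) := by
    rw [Complex.norm_exp, ← Real.exp_nat_mul]; simp
  have h2 : Complex.exp (toComplexOp v (t : Circ)) * Complex.exp (-toComplexOp v (t : Circ)) = 1 := by
    rw [← Complex.exp_add]; simp
  rw [h1]
  linear_combination (ε * g (t : Circ) : ℂ) * h2

theorem exists_bifMap_zero_of_isRotSol {g : C(Circ, ℂ)} {ε ρ : ℝ} (hε : ε ≠ 0) {w : ℝ → ℂ}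
    (hw : IsRotSol g ε w) (hp : Function.Periodic w (2 * π)) (h1 : ∀ t, ‖w t - 1‖ < 1)
    (hρ0 : 0 < ρ) (hρ : ∀ t, ‖Complex.log (w t)‖ < ρ) :
    ∃ v : C(Circ, ℝ) × C(Circ, ℝ), ‖v‖ < ρ ∧ bifMap g (ε, v) = 0 ∧
      ∀ t : ℝ, w t = Complex.exp (toComplexOp v (t : Circ)) := by
  have hslit : ∀ t, w t ∈ Complex.slitPlane := fun t =>
    Complex.ball_one_subset_slitPlane (by simpa [dist_eq_norm] using h1 t)
  have hlc : Continuous fun t => Complex.log (w t) := hw.continuous.clog hslit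
  have hlp : Function.Periodic (fun t => Complex.log (w t)) (2 * π) := fun t => by
    simp only [hp t]
  set z := periodicLift _ hlc hlp with hz
  have hzv : toComplexOp (reOp z, imOp z) = z := by ext x; simp
  refine ⟨(reOp z, imOp z), ?_, ?_, ?_⟩
  · rw [Prod.norm_def, max_lt_iff]
    constructor <;>
    · rw [ContinuousMap.norm_lt_iff _ hρ0]
      intro x
      obtain ⟨t, rfl⟩ := QuotientAddGroup.mk_surjective x
      first
      | exact (Complex.abs_re_le_norm _).trans_lt (hρ t)
      | exact (Complex.abs_im_le_norm _).trans_lt (hρ t)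
  · rw [bifMap_eq_zero_iff g hε, hzv]
    intro t
    have hne : w t ≠ 0 := Complex.slitPlane_ne_zero (hslit t)
    have hd := (hw t).clog_real (hslit t)
    refine hd.congr_deriv ?_
    have h2 : exp (2 * reOp z (t : Circ)) = ‖w t‖ ^ 2 := by
      change exp (2 * (Complex.log (w t)).re) = _
      rw [Complex.log_re, mul_comm, Real.exp_mul, Real.exp_log (norm_pos_iff.2 hne)]
      norm_num
    have h3 : Complex.exp (-z (t : Circ)) = (w t)⁻¹ := by
      rw [hz, periodicLift_coe, Complex.exp_neg, Complex.exp_log hne]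
    rw [h2, h3]
    field_simp
  · intro t
    rw [hzv, hz, periodicLift_coe, Complex.exp_log (Complex.slitPlane_ne_zero (hslit t))]

theorem exists_unique_periodic_isRotSol (g : C(Circ, ℂ)) (h0 : circInt (imOp g) = 0)
    (h1 : circInt (reOp g) ≠ 0) :
    ∃ ε₁ > 0, ∃ δ > 0, ∃ W : ℝ → ℝ → ℂ, Filter.Tendsto (fun ε => W ε 0) (𝓝[>] 0) (𝓝 1) ∧
      ∀ ε ∈ Set.Ioc 0 ε₁, IsRotSol g ε (W ε) ∧ Function.Periodic (W ε) (2 * π) ∧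
        ∀ w, IsRotSol g ε w → Function.Periodic w (2 * π) → ‖w 0 - 1‖ < δ → w = W ε := by
  obtain ⟨γ, hγ, hiff⟩ := exists_bifMap_zeros g h0 h1
  obtain ⟨r, hr, hball⟩ := Metric.eventually_nhds_iff_ball.1 hiff
  obtain ⟨r₁, hr₁, hball₁⟩ := Metric.eventually_nhds_iff_ball.1
    (hγ.eventually (Metric.ball_mem_nhds _ hr))
  have hlog : ∀ᶠ z : ℂ in 𝓝 1, ‖Complex.log z‖ < r := by
    have : ContinuousAt (fun z => ‖Complex.log z‖) 1 :=
      (continuousAt_clog Complex.one_mem_slitPlane).norm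
    exact this.eventually_lt continuousAt_const (by simpa using hr)
  obtain ⟨r₂, hr₂, hball₂⟩ := Metric.eventually_nhds_iff_ball.1 hlog
  set C := exp (6 * (2 * π)) with hC
  have hCpos : 0 < C := exp_pos _
  set ρ := min r₂ 1 with hρ
  have hρpos : 0 < ρ := lt_min hr₂ one_pos
  set P := ‖g‖ + 1 with hP
  have hPpos : 0 < P := by positivity
  have hkey : ∀ ε : ℝ, ∀ v : C(Circ, ℝ) × C(Circ, ℝ), |ε| < r → ‖v‖ < r →
      (bifMap g (ε, v) = 0 ↔ γ ε = v) := fun ε v hε hv =>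
    hball (ε, v) (by simp [Prod.dist_eq, hε, hv])
  refine ⟨min (min (r / 2) (r₁ / 2)) (min (1 / P) (ρ / (4 * C * P))), by positivity,
    ρ / (4 * C), by positivity, fun ε t => Complex.exp (toComplexOp (γ ε) (t : Circ)), ?_, ?_⟩
  · have h2 : Filter.Tendsto (fun ε => toComplexOp (γ ε) ((0 : ℝ) : Circ)) (𝓝 0) (𝓝 0) := by
      have hc : Continuous fun v => toComplexOp v ((0 : ℝ) : Circ) :=
        (continuous_eval_const _).comp toComplexOp.continuous
      have := (hc.tendsto 0).comp hγ
      simpa [Function.comp_def] using this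
    have := (Complex.continuous_exp.tendsto 0).comp h2
    rw [Complex.exp_zero] at this
    exact this.mono_left nhdsWithin_le_nhds
  · rintro ε ⟨hε, hle⟩
    simp only [le_min_iff] at hle
    obtain ⟨⟨hr', hr₁'⟩, hP', hρ'⟩ := hle
    have habs : |ε| < r := by rw [abs_of_pos hε]; linarith
    have hγr : ‖γ ε‖ < r := by
      have := hball₁ ε (by rw [mem_ball_zero_iff, Real.norm_eq_abs, abs_of_pos hε]; linarith)
      simpa using this
    have hz : bifMap g (ε, γ ε) = 0 := (hkey ε _ habs hγr).2 rfl
    refine ⟨hasDerivAt_exp_toComplexOp ((bifMap_eq_zero_iff g hε.ne' _).1 hz), fun t => by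
      simp only [coe_add_two_pi], ?_⟩
    intro w hw hp hw0
    have hεg : ε * ‖g‖ ≤ ε * P := mul_le_mul_of_nonneg_left (by linarith) hε.le
    have hεP : ε * P ≤ 1 := by rwa [le_div_iff₀ hPpos] at hP'
    have hεC : ε * P * C ≤ ρ / 4 := by
      rw [le_div_iff₀ (by positivity)] at hρ'
      linarith
    have hδC : ‖w 0 - 1‖ * C ≤ ρ / 4 := by
      rw [lt_div_iff₀ (by positivity)] at hw0
      linarith
    have hnear : ∀ t, ‖w t - 1‖ < ρ := fun t => by
      have := hw.norm_sub_one_le hp hε.le (hεg.trans hεP) t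
      nlinarith
    obtain ⟨v, hv, hv0, hvw⟩ := exists_bifMap_zero_of_isRotSol hε.ne' hw hp
      (fun t => (hnear t).trans_le (min_le_right _ _)) hr
      (fun t => hball₂ _ (by
        rw [Metric.mem_ball, dist_eq_norm]; exact (hnear t).trans_le (min_le_left _ _)))
    rw [← (hkey ε v habs hv).1 hv0] at hvw
    exact funext hvw

theorem sat_eq (x : ℝ) : sat x = max (-1) (min x 1) := by
  unfold sat
  split_ifs with h1 h2
  · rw [min_eq_left (by linarith), max_eq_left h1.le]
  · rw [min_eq_left h2, max_eq_right (not_lt.1 h1)]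
  · rw [min_eq_right (not_le.1 h2).le, max_eq_right (by norm_num)]

@[fun_prop]
theorem continuous_sat : Continuous sat := by
  rw [funext sat_eq]
  fun_prop

/-- The forcing `sin t + φ(k₁ sin (t + η))`. -/
noncomputable def force (k₁ η t : ℝ) : ℝ := sin t + sat (k₁ * sin (t + η))

@[fun_prop]
theorem continuous_force (k₁ η : ℝ) : Continuous (force k₁ η) := by
  unfold force
  fun_prop

theorem force_periodic (k₁ η : ℝ) : Function.Periodic (force k₁ η) (2 * π) := fun t => by
  rw [force, force, sin_add_two_pi, add_right_comm, sin_add_two_pi]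

/-- The forcing in the coordinates rotating with the unperturbed periodic orbit through
`(sin θ, cos θ)`. -/
noncomputable def rotForce (k₁ η θ : ℝ) : C(Circ, ℂ) :=
  periodicLift (fun t => force k₁ η t * Complex.exp (-((t + θ : ℝ) * Complex.I)))
    (by fun_prop) (fun t => by
      simp only [force_periodic k₁ η t]
      congr 1
      rw [Complex.exp_eq_exp_iff_exists_int]
      exact ⟨-1, by push_cast; ring⟩)

theorem rotForce_coe (k₁ η θ t : ℝ) : rotForce k₁ η θ (t : Circ) =
    force k₁ η t * Complex.exp (-((t + θ : ℝ) * Complex.I)) := rfl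

theorem exp_neg_mul_I (a : ℝ) : Complex.exp (-(a * Complex.I)) = ⟨cos a, -sin a⟩ := by
  rw [← neg_mul, ← Complex.ofReal_neg]
  refine Complex.ext ?_ ?_
  · rw [Complex.exp_ofReal_mul_I_re, cos_neg]
  · rw [Complex.exp_ofReal_mul_I_im, sin_neg]

theorem circInt_im_rotForce (k₁ η θ : ℝ) : circInt (imOp (rotForce k₁ η θ)) =
    -∫ t in (0 : ℝ)..(2 * π), force k₁ η t * sin (t + θ) := by
  rw [circInt_apply, ← intervalIntegral.integral_neg]
  congr 1
  ext t
  rw [imOp_apply, rotForce_coe, exp_neg_mul_I, Complex.im_ofReal_mul, mul_neg]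

theorem circInt_re_rotForce (k₁ η θ : ℝ) : circInt (reOp (rotForce k₁ η θ)) =
    ∫ t in (0 : ℝ)..(2 * π), force k₁ η t * cos (t + θ) := by
  rw [circInt_apply]
  congr 1
  ext t
  rw [reOp_apply, rotForce_coe, exp_neg_mul_I, Complex.re_ofReal_mul]

/-- The curve in the rotating frame associated with a planar curve. -/
noncomputable def toRot (θ : ℝ) (x : ℝ → Fin 2 → ℝ) (t : ℝ) : ℂ :=
  Complex.exp (-((t + θ : ℝ) * Complex.I)) * (x t 1 + x t 0 * Complex.I)

/-- The planar curve associated with a curve in the rotating frame. -/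
noncomputable def ofRot (θ : ℝ) (w : ℝ → ℂ) (t : ℝ) : Fin 2 → ℝ :=
  ![(Complex.exp ((t + θ : ℝ) * Complex.I) * w t).im,
    (Complex.exp ((t + θ : ℝ) * Complex.I) * w t).re]

theorem ofRot_toRot (θ : ℝ) (x : ℝ → Fin 2 → ℝ) : ofRot θ (toRot θ x) = x := by
  ext t i
  have : Complex.exp ((t + θ : ℝ) * Complex.I) * toRot θ x t = x t 1 + x t 0 * Complex.I := by
    rw [toRot, ← mul_assoc, ← Complex.exp_add, add_neg_cancel, Complex.exp_zero, one_mul]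
  rw [ofRot, this]
  fin_cases i <;> simp

theorem toRot_periodic (θ : ℝ) {x : ℝ → Fin 2 → ℝ} (hx : ∀ t, x (t + 2 * π) = x t) :
    Function.Periodic (toRot θ x) (2 * π) := fun t => by
  rw [toRot, toRot, hx]
  congr 1
  rw [Complex.exp_eq_exp_iff_exists_int]
  exact ⟨-1, by push_cast; ring⟩

theorem ofRot_periodic (θ : ℝ) {w : ℝ → ℂ} (hw : Function.Periodic w (2 * π)) (t : ℝ) :
    ofRot θ w (t + 2 * π) = ofRot θ w t := by
  have : Complex.exp ((t + 2 * π + θ : ℝ) * Complex.I) = Complex.exp ((t + θ : ℝ) * Complex.I) := by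
    rw [Complex.exp_eq_exp_iff_exists_int]
    exact ⟨1, by push_cast; ring⟩
  rw [ofRot, ofRot, hw t, this]

theorem isRotSol_toRot {k₁ η ε : ℝ} (θ : ℝ) {x : ℝ → Fin 2 → ℝ}
    (hx : ∀ t, HasDerivAt x (sysF2 k₁ η ε t (x t)) t) :
    IsRotSol (rotForce k₁ η θ) ε (toRot θ x) := by
  intro t
  have h0 := (hasDerivAt_pi.1 (hx t) 0).ofReal_comp
  have h1 := (hasDerivAt_pi.1 (hx t) 1).ofReal_comp
  have hE : HasDerivAt (fun t : ℝ => Complex.exp (-((t + θ : ℝ) * Complex.I)))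
      (Complex.exp (-((t + θ : ℝ) * Complex.I)) * (-(1 * Complex.I))) t := by
    have := (((hasDerivAt_id t).add_const θ).ofReal_comp.mul_const Complex.I).neg.cexp
    simpa using this
  refine (hE.mul (h1.add (h0.mul_const Complex.I))).congr_deriv ?_
  have hn : ‖toRot θ x t‖ ^ 2 = x t 0 ^ 2 + x t 1 ^ 2 := by
    rw [toRot, norm_mul, ← neg_mul, ← Complex.ofReal_neg, Complex.norm_exp_ofReal_mul_I, one_mul,
      ← Complex.normSq_eq_norm_sq]
    simp [Complex.normSq_apply]
    ring
  rw [hn, toRot, rotForce_coe, force]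
  simp only [sysF2, Matrix.cons_val_zero, Matrix.cons_val_one, Pi.add_apply]
  push_cast
  linear_combination (- Complex.exp (-((t + θ : ℂ) * Complex.I)) * x t 0) * Complex.I_sq

theorem hasDerivAt_ofRot {k₁ η ε : ℝ} {θ : ℝ} {w : ℝ → ℂ}
    (hw : IsRotSol (rotForce k₁ η θ) ε w) (t : ℝ) :
    HasDerivAt (ofRot θ w) (sysF2 k₁ η ε t (ofRot θ w t)) t := by
  have hE : HasDerivAt (fun t : ℝ => Complex.exp ((t + θ : ℝ) * Complex.I))
      (Complex.exp ((t + θ : ℝ) * Complex.I) * (1 * Complex.I)) t := by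
    have := (((hasDerivAt_id t).add_const θ).ofReal_comp.mul_const Complex.I).cexp
    simpa using this
  have hz := hE.mul (hw t)
  set z : ℝ → ℂ := fun t => Complex.exp ((t + θ : ℝ) * Complex.I) * w t with hzdef
  have hn : ‖w t‖ ^ 2 = (z t).im ^ 2 + (z t).re ^ 2 := by
    have : ‖w t‖ = ‖z t‖ := by
      simp only [hzdef]
      rw [norm_mul, Complex.norm_exp_ofReal_mul_I, one_mul]
    rw [this, ← Complex.normSq_eq_norm_sq, Complex.normSq_apply]
    ring
  have hz' : HasDerivAt z (Complex.I * z t + z t * (1 - ((z t).im ^ 2 + (z t).re ^ 2 : ℝ))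
      + (ε * force k₁ η t : ℝ)) t := by
    refine hz.congr_deriv ?_
    rw [hn, rotForce_coe]
    have h1 : Complex.exp ((t + θ : ℝ) * Complex.I) * Complex.exp (-((t + θ : ℝ) * Complex.I)) = 1 := by
      rw [← Complex.exp_add, add_neg_cancel, Complex.exp_zero]
    simp only [hzdef]
    push_cast at h1 ⊢
    linear_combination (ε * force k₁ η t : ℂ) * h1
  rw [hasDerivAt_pi]
  intro i
  fin_cases i
  · refine ((Complex.imCLM.hasFDerivAt.comp_hasDerivAt t hz').congr_deriv ?_)
    have hx : ofRot θ w t = ![(z t).im, (z t).re] := rfl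
    rw [hx]
    simp [sysF2, -Complex.ofReal_add, -Complex.ofReal_pow, -Complex.ofReal_mul]
    ring
  · refine ((Complex.reCLM.hasFDerivAt.comp_hasDerivAt t hz').congr_deriv ?_)
    have hx : ofRot θ w t = ![(z t).im, (z t).re] := rfl
    rw [hx]
    simp [sysF2, -Complex.ofReal_add, -Complex.ofReal_pow, -Complex.ofReal_mul, force]
    ring

theorem exists_unique_periodic_near (k₁ η θ : ℝ)
    (h0 : ∫ t in (0 : ℝ)..(2 * π), force k₁ η t * sin (t + θ) = 0)
    (h1 : ∫ t in (0 : ℝ)..(2 * π), force k₁ η t * cos (t + θ) ≠ 0) :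
    ∃ ε₁ > 0, ∃ δ > 0, ∃ Φ : ℝ → ℝ → (Fin 2 → ℝ),
      Filter.Tendsto (fun e => Φ e 0) (𝓝[>] (0 : ℝ)) (𝓝 ![sin θ, cos θ]) ∧
      ∀ e ∈ Set.Ioc (0 : ℝ) ε₁,
        (∀ t : ℝ, HasDerivAt (Φ e) (sysF2 k₁ η e t (Φ e t)) t) ∧
        (∀ t : ℝ, Φ e (t + 2 * π) = Φ e t) ∧
        (∀ ψ : ℝ → (Fin 2 → ℝ),
          (∀ t : ℝ, HasDerivAt ψ (sysF2 k₁ η e t (ψ t)) t) →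
          (∀ t : ℝ, ψ (t + 2 * π) = ψ t) →
          ψ 0 ∈ Metric.ball ![sin θ, cos θ] δ → ψ = Φ e) := by
  obtain ⟨ε₁, hε₁, δ, hδ, W, hlim, hW⟩ := exists_unique_periodic_isRotSol (rotForce k₁ η θ)
    (by rw [circInt_im_rotForce, h0, neg_zero]) (by rwa [circInt_re_rotForce])
  refine ⟨ε₁, hε₁, δ / 2, by positivity, fun e => ofRot θ (W e), ?_, fun e he => ?_⟩
  · have hc : Continuous fun w : ℂ => (![(Complex.exp ((0 + θ : ℝ) * Complex.I) * w).im,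
        (Complex.exp ((0 + θ : ℝ) * Complex.I) * w).re] : Fin 2 → ℝ) := by
      refine continuous_pi fun i => ?_
      fin_cases i
      · exact Complex.continuous_im.comp (continuous_const.mul continuous_id)
      · exact Complex.continuous_re.comp (continuous_const.mul continuous_id)
    have := (hc.tendsto 1).comp hlim
    rw [mul_one, Complex.exp_ofReal_mul_I_im, Complex.exp_ofReal_mul_I_re] at this
    simp only [zero_add] at this hc
    simpa [ofRot, Function.comp_def] using this
  · obtain ⟨hs, hp, hu⟩ := hW e he
    refine ⟨hasDerivAt_ofRot hs, ofRot_periodic θ hp, fun ψ hψ hψp hψ0 => ?_⟩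
    refine (ofRot_toRot θ ψ).symm.trans (congrArg (ofRot θ)
      (hu (toRot θ ψ) (isRotSol_toRot θ hψ) (toRot_periodic θ hψp) ?_))
    have hE : Complex.exp (-((0 + θ : ℝ) * Complex.I)) * (cos θ + sin θ * Complex.I) = 1 := by
      rw [Complex.ofReal_cos, Complex.ofReal_sin, ← Complex.exp_mul_I, ← Complex.exp_add, zero_add,
        neg_add_cancel, Complex.exp_zero]
    have hd : toRot θ ψ 0 - 1 = Complex.exp (-((0 + θ : ℝ) * Complex.I)) *
        (((ψ 0 1 - cos θ : ℝ) : ℂ) + (ψ 0 0 - sin θ : ℝ) * Complex.I) := by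
      rw [toRot, ← hE]; push_cast; ring
    have hc0 := (dist_le_pi_dist (ψ 0) ![sin θ, cos θ] 0).trans_lt (Metric.mem_ball.1 hψ0)
    have hc1 := (dist_le_pi_dist (ψ 0) ![sin θ, cos θ] 1).trans_lt (Metric.mem_ball.1 hψ0)
    simp only [Matrix.cons_val_zero, Matrix.cons_val_one, Real.dist_eq] at hc0 hc1
    rw [hd, norm_mul, ← neg_mul, ← Complex.ofReal_neg, Complex.norm_exp_ofReal_mul_I, one_mul]
    refine (norm_add_le _ _).trans_lt ?_
    rw [norm_mul, Complex.norm_I, mul_one, Complex.norm_real, Complex.norm_real, Real.norm_eq_abs,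
      Real.norm_eq_abs]
    linarith

theorem sat_monotone : Monotone sat := fun x y h => by
  rw [sat_eq, sat_eq]
  exact max_le_max le_rfl (min_le_min h le_rfl)

theorem sat_neg (x : ℝ) : sat (-x) = -sat x := by
  unfold sat
  split_ifs <;> linarith

theorem sat_of_abs_le {x : ℝ} (h : |x| ≤ 1) : sat x = x := by
  rw [sat, if_neg (not_lt.2 (abs_le.1 h).1), if_pos (abs_le.1 h).2]

theorem integral_sin_mul_sat_strictMono :
    StrictMono fun k : ℝ => ∫ t in (0 : ℝ)..(2 * π), sin t * sat (k * sin t) := by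
  intro k k' hk
  refine intervalIntegral.integral_lt_integral_of_continuousOn_of_le_of_exists_lt two_pi_pos
    (by fun_prop) (by fun_prop) ?_ ?_
  · intro t _
    rcases le_total 0 (sin t) with h | h
    · exact mul_le_mul_of_nonneg_left (sat_monotone (mul_le_mul_of_nonneg_right hk.le h)) h
    · exact mul_le_mul_of_nonpos_left (sat_monotone (mul_le_mul_of_nonpos_right hk.le h)) h
  · set y := (|k| + |k'| + 1)⁻¹ with hy
    have hypos : 0 < y := by positivity
    have hyle : y ≤ 1 := inv_le_one_of_one_le₀ (by linarith [abs_nonneg k, abs_nonneg k'])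
    have hmul : (|k| + |k'| + 1) * y = 1 := mul_inv_cancel₀ (by positivity)
    have hs : sin (arcsin y) = y := sin_arcsin (by linarith) hyle
    refine ⟨arcsin y, ⟨arcsin_nonneg.2 hypos.le, ?_⟩, ?_⟩
    · linarith [arcsin_le_pi_div_two y, pi_pos]
    · have h1 : |k * y| ≤ 1 := by
        rw [abs_mul, abs_of_pos hypos]
        nlinarith [abs_nonneg k']
      have h2 : |k' * y| ≤ 1 := by
        rw [abs_mul, abs_of_pos hypos]
        nlinarith [abs_nonneg k]
      rw [hs, sat_of_abs_le h1, sat_of_abs_le h2]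
      exact mul_lt_mul_of_pos_left (mul_lt_mul_of_pos_right hk hypos) hypos

theorem integral_sin_mul_sat_of_abs_le {k : ℝ} (hk : |k| ≤ 1) :
    ∫ t in (0 : ℝ)..(2 * π), sin t * sat (k * sin t) = k * π := by
  have : ∀ t, sin t * sat (k * sin t) = k * sin t ^ 2 := fun t => by
    rw [sat_of_abs_le]
    · ring
    · rw [abs_mul]
      exact mul_le_one₀ hk (abs_nonneg _) (abs_sin_le_one t)
  simp only [this, intervalIntegral.integral_const_mul, integral_sin_sq]
  simp

theorem integral_cos_mul_sat (k : ℝ) :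
    ∫ t in (0 : ℝ)..(2 * π), cos t * sat (k * sin t) = 0 := by
  have h := intervalIntegral.integral_comp_sub_left (a := 0) (b := 2 * π)
    (fun t => cos t * sat (k * sin t)) (2 * π)
  simp only [cos_two_pi_sub, sin_two_pi_sub, mul_neg, sat_neg, intervalIntegral.integral_neg,
    sub_self, sub_zero] at h
  linarith

theorem integral_force_mul_sin (k₁ η θ i₁ : ℝ)
    (hi₁ : i₁ = ∫ t in (0 : ℝ)..(2 * π), sin t * sat (k₁ * sin t)) :
    ∫ t in (0 : ℝ)..(2 * π), force k₁ η t * sin (t + θ) =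
      (π + i₁ * cos η) * cos θ + i₁ * sin η * sin θ := by
  have h1 : ∫ t in (0 : ℝ)..(2 * π), sin t * sin (t + θ) = π * cos θ := by
    have : ∀ t, sin t * sin (t + θ) = cos θ * sin t ^ 2 + sin θ * (sin t * cos t) := fun t => by
      rw [sin_add]; ring
    simp only [this]
    rw [intervalIntegral.integral_add (Continuous.intervalIntegrable (by fun_prop) _ _)
      (Continuous.intervalIntegrable (by fun_prop) _ _), intervalIntegral.integral_const_mul,
      intervalIntegral.integral_const_mul, integral_sin_sq, integral_sin_mul_cos₁]
    simp
    ring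
  have h2 : ∫ t in (0 : ℝ)..(2 * π), sat (k₁ * sin (t + η)) * sin (t + θ) = i₁ * cos (θ - η) := by
    have hp : Function.Periodic (fun s => sat (k₁ * sin s) * sin (s + (θ - η))) (2 * π) :=
      fun s => by simp only [sin_add_two_pi, add_right_comm s (2 * π)]
    have hshift := intervalIntegral.integral_comp_add_right (a := 0) (b := 2 * π)
      (fun s => sat (k₁ * sin s) * sin (s + (θ - η))) η
    rw [zero_add, add_comm (2 * π) η, hp.intervalIntegral_add_eq η 0, zero_add] at hshift
    have e1 : ∀ t, t + η + (θ - η) = t + θ := fun t => by ring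
    simp only [e1] at hshift
    rw [hshift]
    have e2 : ∀ s, sat (k₁ * sin s) * sin (s + (θ - η)) =
        cos (θ - η) * (sin s * sat (k₁ * sin s)) + sin (θ - η) * (cos s * sat (k₁ * sin s)) :=
      fun s => by rw [sin_add]; ring
    simp only [e2]
    rw [intervalIntegral.integral_add (Continuous.intervalIntegrable (by fun_prop) _ _)
      (Continuous.intervalIntegrable (by fun_prop) _ _), intervalIntegral.integral_const_mul,
      intervalIntegral.integral_const_mul, integral_cos_mul_sat, ← hi₁]
    ring
  simp only [force, add_mul]
  rw [intervalIntegral.integral_add (Continuous.intervalIntegrable (by fun_prop) _ _)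
    (Continuous.intervalIntegrable (by fun_prop) _ _), h1, h2, cos_sub]
  ring

theorem integral_force_mul_cos (k₁ η θ i₁ : ℝ)
    (hi₁ : i₁ = ∫ t in (0 : ℝ)..(2 * π), sin t * sat (k₁ * sin t)) :
    ∫ t in (0 : ℝ)..(2 * π), force k₁ η t * cos (t + θ) =
      i₁ * sin η * cos θ - (π + i₁ * cos η) * sin θ := by
  have h := integral_force_mul_sin k₁ η (θ + π / 2) i₁ hi₁
  simp only [← add_assoc, sin_add_pi_div_two, cos_add_pi_div_two] at h
  rw [h]
  ring

theorem melnikov_nondegenerate (k₁ η i₁ : ℝ)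
    (hcong₁ : ¬(k₁ = 1 ∧ ∃ j : ℤ, η = π + 2 * π * j))
    (hcong₂ : ¬(k₁ = -1 ∧ ∃ j : ℤ, η = 2 * π * j))
    (hi₁ : i₁ = ∫ t in (0 : ℝ)..(2 * π), sin t * sat (k₁ * sin t))
    (hB : i₁ * sin η = 0) : π + i₁ * cos η ≠ 0 := by
  intro hA
  have hinj := integral_sin_mul_sat_strictMono.injective
  rcases mul_eq_zero.1 hB with h | h
  · rw [h, zero_mul, add_zero] at hA
    exact pi_ne_zero hA
  · have hc : cos η = 1 ∨ cos η = -1 := by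
      rw [← sq_eq_one_iff]
      nlinarith [sin_sq_add_cos_sq η]
    rcases hc with hc | hc
    · refine hcong₂ ⟨hinj ?_, ?_⟩
      · change _ = ∫ t in (0 : ℝ)..(2 * π), sin t * sat (-1 * sin t)
        rw [integral_sin_mul_sat_of_abs_le (by simp)]
        change (∫ t in (0 : ℝ)..(2 * π), sin t * sat (k₁ * sin t)) = _
        rw [← hi₁]
        rw [hc] at hA
        linarith
      · obtain ⟨n, hn⟩ := (cos_eq_one_iff η).1 hc
        exact ⟨n, by rw [← hn]; ring⟩
    · refine hcong₁ ⟨hinj ?_, ?_⟩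
      · change _ = ∫ t in (0 : ℝ)..(2 * π), sin t * sat (1 * sin t)
        rw [integral_sin_mul_sat_of_abs_le (by simp)]
        change (∫ t in (0 : ℝ)..(2 * π), sin t * sat (k₁ * sin t)) = _
        rw [← hi₁]
        rw [hc] at hA
        linarith
      · obtain ⟨n, hn⟩ := (cos_eq_neg_one_iff).1 hc
        exact ⟨n, by rw [← hn]; ring⟩

theorem melnikov_zero_arctan {A B : ℝ} (hB : B ≠ 0) :
    A * cos (arctan (A / B)) - B * sin (arctan (A / B)) = 0 := by
  have h1 := tan_mul_cos (cos_arctan_pos (A / B)).ne'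
  rw [tan_arctan] at h1
  rw [← h1]
  field_simp
  ring

theorem stmt18
    (k₁ η : ℝ)
    -- (k₁,η) is not congruent (mod 2π in the second component) to (1,π) nor to (-1,0)
    (hcong₁ : ¬(k₁ = 1 ∧ ∃ j : ℤ, η = Real.pi + 2 * Real.pi * j))
    (hcong₂ : ¬(k₁ = -1 ∧ ∃ j : ℤ, η = 2 * Real.pi * j))
    (i₁ : ℝ) (hi₁ : i₁ = ∫ t in (0 : ℝ)..(2 * Real.pi), Real.sin t * sat (k₁ * Real.sin t))
    (θstar : ℝ)
    (hθstar : θstar = Real.arctan ((Real.pi + i₁ * Real.cos η) / (i₁ * Real.sin η)))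
    (θ₁ θ₂ : ℝ)
    (hθcase1 : (k₁ = 0 ∨ ∃ j : ℤ, η = j * Real.pi) →
      θ₁ = Real.pi / 2 ∧ θ₂ = 3 * Real.pi / 2)
    (hθcase2 : ¬(k₁ = 0 ∨ ∃ j : ℤ, η = j * Real.pi) →
      θ₁ = Real.pi - θstar ∧ θ₂ = 2 * Real.pi - θstar)
    (q : Fin 2 → (Fin 2 → ℝ))
    (hq : q = ![![Real.sin θ₁, Real.cos θ₁], ![Real.sin θ₂, Real.cos θ₂]]) :
    ∃ ε₁ > 0, ∃ δ > 0, ∃ Φ : ℝ → Fin 2 → ℝ → (Fin 2 → ℝ),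
      ∀ e ∈ Set.Ioc (0 : ℝ) ε₁, ∀ i : Fin 2,
        -- Φ e i is a 2π-periodic solution of (S'_e)
        (∀ t : ℝ, HasDerivAt (Φ e i) (sysF2 k₁ η e t (Φ e i t)) t) ∧
        (∀ t : ℝ, Φ e i (t + 2 * Real.pi) = Φ e i t) ∧
        -- its initial condition converges to (sin θᵢ, cos θᵢ) as e → 0⁺
        Filter.Tendsto (fun e' => Φ e' i 0) (𝓝[>] (0 : ℝ)) (nhds (q i)) ∧
        -- it is the only 2π-periodic solution with initial value in B_δ(q i)
        (∀ ψ : ℝ → (Fin 2 → ℝ),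
          (∀ t : ℝ, HasDerivAt ψ (sysF2 k₁ η e t (ψ t)) t) →
          (∀ t : ℝ, ψ (t + 2 * Real.pi) = ψ t) →
          ψ 0 ∈ Metric.ball (q i) δ → ψ = Φ e i) := by
  set A := π + i₁ * cos η with hAdef
  set B := i₁ * sin η with hBdef
  have hbranch : A * cos θ₁ + B * sin θ₁ = 0 ∧ A * cos θ₂ + B * sin θ₂ = 0 := by
    by_cases hcase : k₁ = 0 ∨ ∃ j : ℤ, η = j * π
    · obtain ⟨rfl, rfl⟩ := hθcase1 hcase
      have hB : B = 0 := by
        rcases hcase with h | ⟨j, hj⟩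
        · rw [hBdef, hi₁, h, integral_sin_mul_sat_of_abs_le (by simp)]
          simp
        · rw [hBdef, hj, sin_int_mul_pi, mul_zero]
      have h3 : cos (3 * π / 2) = 0 := by
        rw [show 3 * π / 2 = π / 2 + π by ring, cos_add_pi, cos_pi_div_two, neg_zero]
      simp [hB, h3]
    · obtain ⟨rfl, rfl⟩ := hθcase2 hcase
      push Not at hcase
      have hi : i₁ ≠ 0 := by
        intro h
        refine hcase.1 (integral_sin_mul_sat_strictMono.injective ?_)
        rw [← hi₁, integral_sin_mul_sat_of_abs_le (k := 0) (by simp), h, zero_mul]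
      have hs : sin η ≠ 0 := by
        intro h
        obtain ⟨j, hj⟩ := sin_eq_zero_iff.1 h
        exact hcase.2 j hj.symm
      have hz := melnikov_zero_arctan (A := A) (mul_ne_zero hi hs)
      rw [← hθstar] at hz
      rw [cos_pi_sub, sin_pi_sub, cos_two_pi_sub, sin_two_pi_sub]
      constructor <;> linarith
  have hnondeg : ∀ θ, A * cos θ + B * sin θ = 0 → B * cos θ - A * sin θ ≠ 0 := by
    intro θ h h'
    have hsc := sin_sq_add_cos_sq θ
    have hB : B = 0 := by linear_combination (sin θ) * h + (cos θ) * h' - B * hsc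
    have hA : A = 0 := by linear_combination (cos θ) * h - (sin θ) * h' - A * hsc
    exact melnikov_nondegenerate k₁ η i₁ hcong₁ hcong₂ hi₁ hB hA
  have hlocal : ∀ θ, A * cos θ + B * sin θ = 0 → _ := fun θ hθ =>
    exists_unique_periodic_near k₁ η θ
      (by rw [integral_force_mul_sin k₁ η θ i₁ hi₁]; exact hθ)
      (by rw [integral_force_mul_cos k₁ η θ i₁ hi₁]; exact hnondeg θ hθ)
  obtain ⟨ε₁, hε₁, δ₁, hδ₁, Φ₁, hlim₁, hΦ₁⟩ := hlocal θ₁ hbranch.1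
  obtain ⟨ε₂, hε₂, δ₂, hδ₂, Φ₂, hlim₂, hΦ₂⟩ := hlocal θ₂ hbranch.2
  subst hq
  refine ⟨min ε₁ ε₂, lt_min hε₁ hε₂, min δ₁ δ₂, lt_min hδ₁ hδ₂, fun e => ![Φ₁ e, Φ₂ e], ?_⟩
  intro e he i
  fin_cases i
  · obtain ⟨h1, h2, h3⟩ := hΦ₁ e ⟨he.1, he.2.trans (min_le_left _ _)⟩
    exact ⟨h1, h2, hlim₁, fun ψ hψ hp h0 =>
      h3 ψ hψ hp (Metric.ball_subset_ball (min_le_left _ _) h0)⟩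
  · obtain ⟨h1, h2, h3⟩ := hΦ₂ e ⟨he.1, he.2.trans (min_le_right _ _)⟩
    exact ⟨h1, h2, hlim₂, fun ψ hψ hp h0 =>
      h3 ψ hψ hp (Metric.ball_subset_ball (min_le_right _ _) h0)⟩
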